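/- arXiv:1310.3015 — 3 statements merged into one kernel-verified Lean document; each statement's English description precedes it below -/
import Mathlib

section
/- Let N, p, q be positive integers, let H_0, …, H_{N−1} be p×q complex matrices, and let H_c be the Np×Nq block circulant matrix whose (i,j)-th p×q block (0-indexed, i, j = 0, …, N−1) equals H_{(j−i) mod N}, so that its first row block is [H_0, H_1, …, H_{N−1}]. Let W_N be the N×N normalized DFT matrix with entries W_N(k,l) = N^{−1/2} e^{ι2πkl/N} for k, l = 0, …, N−1, and let ⊗ denote the Kronecker product. Then the matrix (W_N^H ⊗ I_p) H_c (W_N ⊗ I_q) is block diagonal: its (k,l)-th p×q block is zero whenever k ≠ l, and its k-th diagonal block equals Σ_{n=0}^{N−1} H_n e^{ι2πkn/N}. -/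
open Matrix Complex Real Kronecker

/-!
A block circulant matrix is a sum of Kronecker products of the cyclic shifts with its blocks.
Characters are common eigenvectors of all shifts and distinct characters are orthogonal, so the
Fourier matrix diagonalizes every shift; tensoring with the blocks, which the identity factors
leave untouched, diagonalizes the block circulant matrix blockwise.
-/

section BlockCirculant

variable {G κ m n R : Type*}

/-- The block matrix over an additive group `G` (cyclic in the classical case) whose `(i, j)`-th
block is `H (j - i)`, so that `H` is its row of blocks at `0`; this is the transpose of the
convention of `Matrix.circulant`. -/
def blockCirculant [Sub G] (H : G → Matrix m n R) : Matrix (G × m) (G × n) R :=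
  of fun x y => H (y.1 - x.1) x.2 y.2

theorem blockCirculant_eq_sum_kronecker [AddGroup G] [Fintype G] [DecidableEq G]
    [NonAssocSemiring R] (H : G → Matrix m n R) :
    blockCirculant H = ∑ g, (Equiv.addLeft g).permMatrix R ⊗ₖ H g := by
  ext ⟨i, a⟩ ⟨j, b⟩
  simp [blockCirculant, Matrix.sum_apply, PEquiv.toMatrix_apply, ← eq_sub_iff_add_eq]

theorem blockCirculant_mul_kronecker_one [AddGroup G] [Fintype G] [DecidableEq G]
    [Fintype κ] [DecidableEq κ] [Fintype m] [DecidableEq m] [Fintype n] [DecidableEq n]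
    [CommSemiring R] (H : G → Matrix m n R) {C : Matrix G κ R} {μ : G → κ → R}
    (hC : ∀ g, (Equiv.addLeft g).permMatrix R * C = C * diagonal (μ g)) :
    blockCirculant H * (C ⊗ₖ (1 : Matrix n n R)) =
      (C ⊗ₖ (1 : Matrix m m R)) * ∑ g, diagonal (μ g) ⊗ₖ H g := by
  simp_rw [blockCirculant_eq_sum_kronecker, Matrix.sum_mul, Matrix.mul_sum, ← mul_kronecker_mul,
    hC, Matrix.mul_one, Matrix.one_mul]

end BlockCirculant

section Characters

variable {G κ 𝕜 : Type*} [Fintype G] [RCLike 𝕜]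

/-- The normalized Fourier matrix of a family of characters: its columns are the characters,
scaled to unit `ℓ²` norm when `G` is a group. -/
noncomputable def normalizedCharMatrix [AddMonoid G] (ψ : κ → AddChar G 𝕜) : Matrix G κ 𝕜 :=
  of fun g k => ((√(Fintype.card G) : ℝ) : 𝕜)⁻¹ * ψ k g

theorem permMatrix_addLeft_mul_normalizedCharMatrix [AddGroup G] [DecidableEq G]
    [Fintype κ] [DecidableEq κ] (ψ : κ → AddChar G 𝕜) (g : G) :
    (Equiv.addLeft g).permMatrix 𝕜 * normalizedCharMatrix ψ =
      normalizedCharMatrix ψ * diagonal fun k => ψ k g := by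
  ext i k
  simp only [PEquiv.toMatrix_toPEquiv_mul, mul_diagonal, submatrix_apply, normalizedCharMatrix,
    of_apply, Equiv.coe_addLeft, AddChar.map_add_eq_mul, id_eq]
  ring

theorem conjTranspose_normalizedCharMatrix_mul_self [AddCommGroup G] [DecidableEq κ]
    {ψ : κ → AddChar G 𝕜} (hψ : Function.Injective ψ) :
    (normalizedCharMatrix ψ)ᴴ * normalizedCharMatrix ψ = 1 := by
  ext k l
  have hsqrt : ((√(Fintype.card G) : ℝ) : 𝕜) * (√(Fintype.card G) : ℝ) = Fintype.card G := by
    exact_mod_cast Real.mul_self_sqrt (Nat.cast_nonneg _)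
  calc ((normalizedCharMatrix ψ)ᴴ * normalizedCharMatrix ψ) k l
      = RCLike.wInner RCLike.cWeight (ψ k : G → 𝕜) (ψ l) := by
        simp_rw [RCLike.wInner_cWeight_eq_expect, Fintype.expect_eq_sum_div_card, ← hsqrt,
          Finset.sum_div, mul_apply, normalizedCharMatrix, conjTranspose_apply, of_apply,
          RCLike.inner_apply, star_mul', star_inv₀, RCLike.star_def, RCLike.conj_ofReal]
        refine Finset.sum_congr rfl fun g _ => ?_
        ring
    _ = (1 : Matrix κ κ 𝕜) k l := by
        simp only [AddChar.wInner_cWeight_eq_boole, one_apply, hψ.eq_iff]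

end Characters

section FinChar

variable {N : ℕ} [NeZero N]

/-- The `k`-th character `l ↦ exp (2πikl / N)` of `Fin N`, as the pullback of a character of
`ZMod N`. -/
noncomputable def finChar (k : Fin N) : AddChar (Fin N) ℂ :=
  (ZMod.stdAddChar.mulShift (ZMod.finEquiv N k)).compAddMonoidHom
    (ZMod.finEquiv N).toAddEquiv.toAddMonoidHom

theorem finChar_injective : Function.Injective (finChar : Fin N → AddChar (Fin N) ℂ) :=
  (AddChar.compAddMonoidHom_injective_left _ (ZMod.finEquiv N).surjective).comp <|
    (AddChar.to_mulShift_inj_of_isPrimitive (ZMod.isPrimitive_stdAddChar N)).comp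
      (ZMod.finEquiv N).injective

theorem zmodFinEquiv_eq_natCast (k : Fin N) : ZMod.finEquiv N k = ((k : ℕ) : ZMod N) := by
  obtain ⟨M, rfl⟩ := Nat.exists_eq_succ_of_ne_zero (NeZero.ne N)
  -- `ZMod (M + 1)` unfolds to `Fin (M + 1)`, and `ZMod.finEquiv` to the identity.
  exact (Fin.cast_val_eq_self k).symm

theorem finChar_apply (k l : Fin N) :
    finChar k l = Complex.exp (Complex.I * (2 * π * k * l) / N) := by
  have hcast : ZMod.finEquiv N k * ZMod.finEquiv N l = (((k : ℕ) * (l : ℕ) : ℤ) : ZMod N) := by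
    simp [zmodFinEquiv_eq_natCast]
  calc finChar k l = ZMod.stdAddChar (((k : ℕ) * (l : ℕ) : ℤ) : ZMod N) :=
        congrArg ZMod.stdAddChar hcast
    _ = Complex.exp (Complex.I * (2 * π * k * l) / N) := by
        rw [ZMod.stdAddChar_coe]
        push_cast
        ring_nf

theorem normalizedCharMatrix_finChar_apply (k l : Fin N) :
    normalizedCharMatrix finChar k l =
      (1 / √N : ℂ) * Complex.exp (Complex.I * (2 * π * k * l) / N) := by
  simp only [normalizedCharMatrix, of_apply, finChar_apply, Fintype.card_fin, one_div,
    mul_right_comm _ (l : ℂ), RCLike.ofReal_eq_complex_ofReal]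

end FinChar

theorem block_circulant_diagonalization_general {G κ m n 𝕜 : Type*} [AddCommGroup G] [Fintype G]
    [DecidableEq κ] [Fintype m] [DecidableEq m] [Fintype n] [DecidableEq n] [RCLike 𝕜]
    {ψ : κ → AddChar G 𝕜} (hψ : Function.Injective ψ) (H : G → Matrix m n 𝕜) :
    ((normalizedCharMatrix ψ)ᴴ ⊗ₖ (1 : Matrix m m 𝕜)) * blockCirculant H *
        (normalizedCharMatrix ψ ⊗ₖ (1 : Matrix n n 𝕜)) =
      reindex (.prodComm m κ) (.prodComm n κ) (blockDiagonal fun k => ∑ g, ψ k g • H g) := by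
  classical
  have : Finite κ := Finite.of_injective ψ hψ
  have := Fintype.ofFinite κ
  rw [Matrix.mul_assoc,
    blockCirculant_mul_kronecker_one H (permMatrix_addLeft_mul_normalizedCharMatrix ψ),
    ← Matrix.mul_assoc, ← mul_kronecker_mul, conjTranspose_normalizedCharMatrix_mul_self hψ,
    Matrix.mul_one, one_kronecker_one, Matrix.one_mul]
  ext ⟨k, a⟩ ⟨l, b⟩
  simp [Matrix.sum_apply, blockDiagonal_apply, diagonal_apply]

/-- Block circulant matrices are block-diagonalized by the DFT matrix:
the `(k,l)`-th block of `(W_Nᴴ ⊗ I_p) H_c (W_N ⊗ I_q)` vanishes for `k ≠ l`,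
and the `k`-th diagonal block equals `Σ_n H_n e^{ι2πkn/N}`. -/
theorem block_circulant_diagonalization
    (N p q : ℕ) (hN : 0 < N) (hp : 0 < p) (hq : 0 < q)
    (H : Fin N → Matrix (Fin p) (Fin q) ℂ)
    (Hc : Matrix (Fin N × Fin p) (Fin N × Fin q) ℂ)
    (hHc : ∀ (i j : Fin N) (a : Fin p) (b : Fin q), Hc (i, a) (j, b) = H (j - i) a b)
    (W : Matrix (Fin N) (Fin N) ℂ)
    (hW : ∀ k l : Fin N,
      W k l = (1 / Real.sqrt N : ℂ) * Complex.exp (Complex.I * (2 * π * k * l) / N))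
    (D : Matrix (Fin N × Fin p) (Fin N × Fin q) ℂ)
    (hD : D = (Wᴴ ⊗ₖ (1 : Matrix (Fin p) (Fin p) ℂ)) * Hc
              * (W ⊗ₖ (1 : Matrix (Fin q) (Fin q) ℂ))) :
    (∀ (k l : Fin N) (a : Fin p) (b : Fin q), k ≠ l → D (k, a) (l, b) = 0) ∧
    (∀ (k : Fin N) (a : Fin p) (b : Fin q),
      D (k, a) (k, b) =
        ∑ n : Fin N, H n a b * Complex.exp (Complex.I * (2 * π * k * n) / N)) := by
  have : NeZero N := ⟨hN.ne'⟩
  obtain rfl : W = normalizedCharMatrix finChar := by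
    ext k l
    rw [hW, normalizedCharMatrix_finChar_apply]
  obtain rfl : Hc = blockCirculant H := by
    ext ⟨i, a⟩ ⟨j, b⟩
    exact hHc i j a b
  rw [hD, block_circulant_diagonalization_general finChar_injective]
  refine ⟨fun k l a b hkl => ?_, fun k a b => ?_⟩
  · simp [blockDiagonal_apply, hkl]
  · simp [blockDiagonal_apply, Matrix.sum_apply, finChar_apply, mul_comm]
end

section
/- Let I be a nonempty finite index set, and for each i ∈ I let θ_i > 0, d_i ≥ 0 and c_i ∈ ℝ be given, and let P > 0. Consider minimizing f(p) = Σ_{i∈I} θ_i (d_i² p_i² − 2 d_i p_i + c_i) over all p : I → ℝ satisfying p_i ≥ 0 for all i and Σ_{i∈I} p_i² = P. Suppose μ ∈ ℝ satisfies θ_i d_i² + μ > 0 for all i ∈ I and Σ_{i∈I} (max(θ_i d_i/(θ_i d_i² + μ), 0))² = P. Then the point p* defined by p*_i = max(θ_i d_i/(θ_i d_i² + μ), 0) is a global minimizer: p* is feasible (p*_i ≥ 0 for all i and Σ_i (p*_i)² = P), and f(p*) ≤ f(p) for every p : I → ℝ with p_i ≥ 0 for all i and Σ_i p_i² = P. 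-/
open Finset

/-!
The multiplier `μ` turns the power constraint into a penalty: the Lagrangian
`f(p) + μ ∑ i, p i ^ 2` splits into the one-variable quadratics
`(θ i * d i ^ 2 + μ) * x ^ 2 - 2 * (θ i * d i) * x + θ i * c i`. As the leading coefficients are
positive, each is minimized over `x ≥ 0` by truncating its vertex at zero, which gives
`waterfilling θ d μ i`. On the set `∑ i, p i ^ 2 = P` the penalty is constant, so a minimizer of
the Lagrangian that lies in this set minimizes `f` there.
-/

section Objective

variable {I R : Type*} [Fintype I] [CommRing R]

/-- The weighted sum mean-square error of parallel scalar channels with weights `θ`, gains `d` and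
noise constants `c`, as a function of the amplitudes `p`; the power spent on channel `i` is
`p i ^ 2`. -/
def weightedMSE (θ d c p : I → R) : R :=
  ∑ i, θ i * (d i ^ 2 * p i ^ 2 - 2 * d i * p i + c i)

lemma weightedMSE_add_mul_sum_sq (θ d c p : I → R) (μ : R) :
    weightedMSE θ d c p + μ * ∑ i, p i ^ 2 =
      ∑ i, ((θ i * d i ^ 2 + μ) * p i ^ 2 - 2 * (θ i * d i) * p i + θ i * c i) := by
  rw [weightedMSE, mul_sum, ← sum_add_distrib]
  exact sum_congr rfl fun i _ => by ring

end Objective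

section Minimizer

variable {I 𝕜 : Type*} [Field 𝕜] [LinearOrder 𝕜]

/-- The water-filling amplitudes at multiplier `μ`. They are meaningful only when every
`θ i * d i ^ 2 + μ` is nonzero, since division by zero returns `0`. -/
def waterfilling (θ d : I → 𝕜) (μ : 𝕜) (i : I) : 𝕜 :=
  max (θ i * d i / (θ i * d i ^ 2 + μ)) 0

lemma waterfilling_nonneg (θ d : I → 𝕜) (μ : 𝕜) (i : I) : 0 ≤ waterfilling θ d μ i :=
  le_max_right _ _

variable [IsStrictOrderedRing 𝕜]

lemma quadratic_max_div_zero_le {a b x : 𝕜} (ha : 0 < a) (hx : b < 0 → 0 ≤ x) :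
    a * max (b / a) 0 ^ 2 - 2 * b * max (b / a) 0 ≤ a * x ^ 2 - 2 * b * x := by
  rcases lt_or_ge b 0 with hb | hb
  · have hlinear : b * x ≤ 0 := mul_nonpos_of_nonpos_of_nonneg hb.le (hx hb)
    have hsquare : 0 ≤ a * x ^ 2 := by positivity
    rw [max_eq_right (div_neg_of_neg_of_pos hb ha).le]
    linarith
  · have hgap : a * x ^ 2 - 2 * b * x - (a * (b / a) ^ 2 - 2 * b * (b / a)) =
        a * (x - b / a) ^ 2 := by
      field_simp
      ring
    rw [max_eq_left (div_nonneg hb ha.le), ← sub_nonneg, hgap]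
    positivity

variable [Fintype I] {θ d : I → 𝕜} {μ : 𝕜}

lemma lagrangian_waterfilling_le (c : I → 𝕜) (hden : ∀ i, 0 < θ i * d i ^ 2 + μ)
    {p : I → 𝕜} (hp : ∀ i, θ i * d i < 0 → 0 ≤ p i) :
    weightedMSE θ d c (waterfilling θ d μ) + μ * ∑ i, waterfilling θ d μ i ^ 2 ≤
      weightedMSE θ d c p + μ * ∑ i, p i ^ 2 := by
  simp only [weightedMSE_add_mul_sum_sq]
  gcongr ∑ i, (?_ + _) with i
  exact quadratic_max_div_zero_le (hden i) (hp i)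

theorem waterfilling_global_minimizer_general (c : I → 𝕜) {P : 𝕜}
    (hden : ∀ i, 0 < θ i * d i ^ 2 + μ) (hpow : ∑ i, waterfilling θ d μ i ^ 2 = P) :
    (∀ i, 0 ≤ waterfilling θ d μ i) ∧ ∑ i, waterfilling θ d μ i ^ 2 = P ∧
      ∀ p : I → 𝕜, (∀ i, θ i * d i < 0 → 0 ≤ p i) → ∑ i, p i ^ 2 = P →
        weightedMSE θ d c (waterfilling θ d μ) ≤ weightedMSE θ d c p := by
  refine ⟨waterfilling_nonneg θ d μ, hpow, fun p hp hpP => ?_⟩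
  have hlagrangian := lagrangian_waterfilling_le c hden hp
  rwa [hpow, hpP, add_le_add_iff_right] at hlagrangian

end Minimizer

/-- Proposition 1 (water-filling power allocation): the point
`p*_i = max(θ_i d_i/(θ_i d_i² + μ), 0)` determined by the multiplier `μ` is a
global minimizer of the weighted sum MSE subject to the total power constraint. -/
theorem waterfilling_global_minimizer
    {I : Type*} [Fintype I] [Nonempty I]
    (θ d c : I → ℝ) (P : ℝ)
    (hθ : ∀ i, 0 < θ i) (hd : ∀ i, 0 ≤ d i) (hP : 0 < P)
    (μ : ℝ)
    (hden : ∀ i, 0 < θ i * (d i) ^ 2 + μ)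
    (hpow : ∑ i, (max (θ i * d i / (θ i * (d i) ^ 2 + μ)) 0) ^ 2 = P)
    (pstar : I → ℝ)
    (hpstar : ∀ i, pstar i = max (θ i * d i / (θ i * (d i) ^ 2 + μ)) 0) :
    (∀ i, 0 ≤ pstar i) ∧ (∑ i, (pstar i) ^ 2 = P) ∧
    ∀ p : I → ℝ, (∀ i, 0 ≤ p i) → (∑ i, (p i) ^ 2 = P) →
      ∑ i, θ i * ((d i) ^ 2 * (pstar i) ^ 2 - 2 * d i * pstar i + c i) ≤
      ∑ i, θ i * ((d i) ^ 2 * (p i) ^ 2 - 2 * d i * p i + c i) := by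
  obtain rfl : pstar = waterfilling θ d μ := funext hpstar
  exact (waterfilling_global_minimizer_general c hden hpow).imp_right
    (And.imp_right fun hmin p hp => hmin p fun i _ => hp i)
end

section
/- Let I be a nonempty finite index set, and for each i ∈ I let θ_i > 0, d_i ≥ 0 and c_i ∈ ℝ be given, and let P > 0. Define f(p) = Σ_{i∈I} θ_i (d_i² p_i² − 2 d_i p_i + c_i). Suppose p : I → ℝ, μ ∈ ℝ, and λ : I → ℝ satisfy the KKT conditions: p_i ≥ 0 and λ_i ≥ 0 for all i, Σ_{i∈I} p_i² = P, θ_i d_i² + μ > 0 for all i, complementary slackness λ_i p_i = 0 for all i, and stationarity 2 θ_i d_i² p_i − 2 θ_i d_i + 2 μ p_i − λ_i = 0 for all i. Then p is a global minimizer: f(p) ≤ f(q) for every q : I → ℝ with q_i ≥ 0 for all i and Σ_{i∈I} q_i² = P. -/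
open Finset

/-!
Adding a multiple `μ ∑ pᵢ²` of the power to the objective changes it only by a constant on the
feasible set, so it suffices that `p` minimizes the Lagrangian over the nonnegative orthant. The
Lagrangian is a sum of scalar quadratics with leading coefficients `θᵢ dᵢ² + μ`, and on the
half-line stationarity and complementary slackness single out a minimizer of each convex summand.
-/

section Optimization

variable {X F R : Type*}

theorem isMinOn_of_isMinOn_add_comp [Add R] [Preorder R] [AddRightReflectLE R]
    {f : X → R} {g : X → F} {φ : F → R} {S : Set X} {p : X}
    (h : IsMinOn (fun x ↦ f x + φ (g x)) S p) : IsMinOn f {x ∈ S | g x = g p} p := by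
  rintro x ⟨hxS, hgx⟩
  have hle : f p + φ (g p) ≤ f x + φ (g x) := h hxS
  rw [hgx] at hle
  exact le_of_add_le_add_right hle

theorem isMinOn_pi_sum {I : Type*} {α : I → Type*} [AddCommMonoid R] [Preorder R]
    [AddLeftMono R] {s : Finset I} {f : ∀ i, α i → R} {S : ∀ i, Set (α i)} {p : ∀ i, α i}
    (h : ∀ i ∈ s, IsMinOn (f i) (S i) (p i)) :
    IsMinOn (fun x ↦ ∑ i ∈ s, f i (x i)) ((s : Set I).pi S) p :=
  fun _ hx ↦ sum_le_sum fun i hi ↦ h i hi (hx i hi)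

theorem isMinOn_quadratic_Ici_zero [CommRing R] [LinearOrder R] [IsOrderedRing R]
    {a b p : R} (e : R) (ha : 0 ≤ a) (hderiv : 0 ≤ 2 * a * p + b)
    (hslack : (2 * a * p + b) * p = 0) :
    IsMinOn (fun x ↦ a * x ^ 2 + b * x + e) (Set.Ici 0) p := by
  intro x hx
  have hremainder : 0 ≤ a * (x - p) ^ 2 := mul_nonneg ha (sq_nonneg _)
  have htangent : 0 ≤ (2 * a * p + b) * (x - p) := by
    rw [mul_sub, hslack, sub_zero]
    exact mul_nonneg hderiv hx
  calc a * p ^ 2 + b * p + e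
      ≤ a * p ^ 2 + b * p + e + ((2 * a * p + b) * (x - p) + a * (x - p) ^ 2) :=
        le_add_of_nonneg_right (add_nonneg htangent hremainder)
    _ = a * x ^ 2 + b * x + e := by ring

end Optimization

section PowerAllocation

variable {I R : Type*} [CommRing R]

/-- The weighted sum mean-square error of the parallel scalar channels `i ∈ s` with gains `d i`,
weights `θ i` and noise constants `c i`; the amplitudes `p i` have power `p i ^ 2`. -/
def weightedSumMSE (s : Finset I) (θ d c p : I → R) : R :=
  ∑ i ∈ s, θ i * (d i ^ 2 * p i ^ 2 - 2 * d i * p i + c i)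

theorem weightedSumMSE_add_mul_sum_sq (s : Finset I) (θ d c p : I → R) (μ : R) :
    weightedSumMSE s θ d c p + μ * ∑ i ∈ s, p i ^ 2 =
      ∑ i ∈ s, ((θ i * d i ^ 2 + μ) * p i ^ 2 + -(2 * θ i * d i) * p i + θ i * c i) := by
  rw [weightedSumMSE, mul_sum, ← sum_add_distrib]
  exact sum_congr rfl fun i _ ↦ by ring

variable [LinearOrder R] [IsOrderedRing R] {s : Finset I} {θ d p lam : I → R} {μ : R}

theorem isMinOn_weightedSumMSE_add_mul_sum_sq (c : I → R)
    (hlam : ∀ i ∈ s, 0 ≤ lam i) (hcurv : ∀ i ∈ s, 0 ≤ θ i * d i ^ 2 + μ)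
    (hcs : ∀ i ∈ s, lam i * p i = 0)
    (hstat : ∀ i ∈ s,
      2 * θ i * d i ^ 2 * p i - 2 * θ i * d i + 2 * μ * p i - lam i = 0) :
    IsMinOn (fun q ↦ weightedSumMSE s θ d c q + μ * ∑ i ∈ s, q i ^ 2)
      ((s : Set I).pi fun _ ↦ Set.Ici 0) p := by
  simp only [weightedSumMSE_add_mul_sum_sq]
  refine isMinOn_pi_sum
    (f := fun i x ↦ (θ i * d i ^ 2 + μ) * x ^ 2 + -(2 * θ i * d i) * x + θ i * c i)
    fun i hi ↦ ?_
  have hderiv : 2 * (θ i * d i ^ 2 + μ) * p i + -(2 * θ i * d i) = lam i := by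
    linear_combination hstat i hi
  exact isMinOn_quadratic_Ici_zero _ (hcurv i hi) (hderiv ▸ hlam i hi) (hderiv ▸ hcs i hi)

theorem kkt_sufficiency_power_allocation_general (c : I → R)
    (hlam : ∀ i ∈ s, 0 ≤ lam i) (hcurv : ∀ i ∈ s, 0 ≤ θ i * d i ^ 2 + μ)
    (hcs : ∀ i ∈ s, lam i * p i = 0)
    (hstat : ∀ i ∈ s,
      2 * θ i * d i ^ 2 * p i - 2 * θ i * d i + 2 * μ * p i - lam i = 0) :
    IsMinOn (weightedSumMSE s θ d c)
      {q | (∀ i ∈ s, 0 ≤ q i) ∧ ∑ i ∈ s, q i ^ 2 = ∑ i ∈ s, p i ^ 2} p :=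
  (isMinOn_of_isMinOn_add_comp (g := fun q : I → R ↦ ∑ i ∈ s, q i ^ 2) (φ := fun t ↦ μ * t)
    (isMinOn_weightedSumMSE_add_mul_sum_sq c hlam hcurv hcs hstat)).on_subset
    fun _ hq ↦ ⟨hq.1, hq.2⟩

end PowerAllocation

/-- KKT sufficiency for the power-allocation problem: any point satisfying the
KKT conditions (primal feasibility, dual feasibility, complementary slackness,
stationarity) with `θ_i d_i² + μ > 0` is a global minimizer of the weighted sum
MSE subject to the total power constraint. -/
theorem kkt_sufficiency_power_allocation
    {I : Type*} [Fintype I] [Nonempty I]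
    (θ d c : I → ℝ) (P : ℝ)
    (hθ : ∀ i, 0 < θ i) (hd : ∀ i, 0 ≤ d i) (hP : 0 < P)
    (p : I → ℝ) (μ : ℝ) (lam : I → ℝ)
    (hp : ∀ i, 0 ≤ p i) (hlam : ∀ i, 0 ≤ lam i)
    (hfeas : ∑ i, (p i) ^ 2 = P)
    (hden : ∀ i, 0 < θ i * (d i) ^ 2 + μ)
    (hcs : ∀ i, lam i * p i = 0)
    (hstat : ∀ i, 2 * θ i * (d i) ^ 2 * p i - 2 * θ i * d i + 2 * μ * p i - lam i = 0) :
    ∀ q : I → ℝ, (∀ i, 0 ≤ q i) → (∑ i, (q i) ^ 2 = P) →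
      ∑ i, θ i * ((d i) ^ 2 * (p i) ^ 2 - 2 * d i * p i + c i) ≤
      ∑ i, θ i * ((d i) ^ 2 * (q i) ^ 2 - 2 * d i * q i + c i) :=
  fun _ hq hqP ↦ kkt_sufficiency_power_allocation_general (s := univ) c (fun i _ ↦ hlam i)
    (fun i _ ↦ (hden i).le) (fun i _ ↦ hcs i) (fun i _ ↦ hstat i)
    ⟨fun i _ ↦ hq i, hqP.trans hfeas.symm⟩
end
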